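/- There is an absolute constant C such that the following holds for every α ∈ (0, 1/1000]. For all twice continuously differentiable Ω, η with compact support contained in (0,∞)×(0,π/2): ⟨D_β L₁(Ω,η), (D_β Ω) φ₂⟩ + ⟨D_β L₂(Ω,η), (D_β η) φ₂⟩ ≤ −(1/5 − α) (‖(D_β Ω) φ₂^{1/2}‖₂² + ‖(D_β η) φ₂^{1/2}‖₂²) + C α (L₁₂(Ω)(0)² + ‖L̃₁₂(Ω)/R‖²_{L²(R)}). -/

import Mathlib

open Real MeasureTheory Set

noncomputable section

namespace Paper

/-- The domain `(0,∞) × (0,π/2)` in the `(R,β)` variables. -/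
def Qdom : Set (ℝ × ℝ) := Set.Ioi (0:ℝ) ×ˢ Set.Ioo (0:ℝ) (Real.pi/2)

/-- Inner product `⟨f,g⟩ = ∫₀^∞ ∫₀^{π/2} f g dβ dR`. -/
def inner2 (f g : ℝ → ℝ → ℝ) : ℝ :=
  ∫ R in Set.Ioi (0:ℝ), ∫ β in Set.Ioo (0:ℝ) (Real.pi/2), f R β * g R β

/-- The `L²` norm `‖f‖₂`. -/
def norm2 (f : ℝ → ℝ → ℝ) : ℝ := Real.sqrt (inner2 f f)

/-- `‖h‖_{L²(R)}` for functions of `R` alone. -/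
def normR (h : ℝ → ℝ) : ℝ := Real.sqrt (∫ R in Set.Ioi (0:ℝ), (h R)^2)

/-- `D_R = R ∂_R`. -/
def DR (f : ℝ → ℝ → ℝ) : ℝ → ℝ → ℝ := fun R β => R * deriv (fun r => f r β) R

/-- `D_R` for functions of `R` alone. -/
def DR1 (h : ℝ → ℝ) : ℝ → ℝ := fun R => R * deriv h R

/-- `D_β = sin(2β) ∂_β`. -/
def Dbeta (f : ℝ → ℝ → ℝ) : ℝ → ℝ → ℝ :=
  fun R β => Real.sin (2*β) * deriv (fun b => f R b) β

/-- `L₁₂(Ω)(R) = ∫_R^∞ ∫₀^{π/2} Ω(s,β) sin(2β) s⁻¹ dβ ds`. -/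
def L12 (Ω : ℝ → ℝ → ℝ) (R : ℝ) : ℝ :=
  ∫ s in Set.Ioi R, ∫ β in Set.Ioo (0:ℝ) (Real.pi/2), Ω s β * Real.sin (2*β) / s

/-- `L̃₁₂(Ω)(R) = L₁₂(Ω)(R) − L₁₂(Ω)(0)`. -/
def tL12 (Ω : ℝ → ℝ → ℝ) (R : ℝ) : ℝ := L12 Ω R - L12 Ω 0

/-- Compact support contained in the open domain `(0,∞)×(0,π/2)`. -/
def suppIn (f : ℝ → ℝ → ℝ) : Prop :=
  ∃ K : Set (ℝ × ℝ), IsCompact K ∧ K ⊆ Qdom ∧ ∀ x y : ℝ, (x, y) ∉ K → f x y = 0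

/-- Integrability over the domain. -/
def Integrable2 (f : ℝ → ℝ → ℝ) : Prop :=
  MeasureTheory.IntegrableOn (Function.uncurry f) Qdom

/-- `Γ(β) = (cos β)^α`. -/
def Γf (α : ℝ) (β : ℝ) : ℝ := Real.cos β ^ α

/-- The normalizing constant `c = (2/π)∫₀^{π/2} Γ(β) sin(2β) dβ`. -/
def cst (α : ℝ) : ℝ :=
  (2/Real.pi) * ∫ β in Set.Ioo (0:ℝ) (Real.pi/2), Γf α β * Real.sin (2*β)

/-- The approximate profile `Ω̄`. -/
def Ωbar (α : ℝ) : ℝ → ℝ → ℝ := fun R β => (α / cst α) * Γf α β * (3*R/(1+R)^2)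

/-- The approximate profile `η̄`. -/
def ηbar (α : ℝ) : ℝ → ℝ → ℝ := fun R β => (α / cst α) * Γf α β * (6*R/(1+R)^3)

/-- The singular weight `φ₁ = (1+R)⁴R⁻⁴ sin(2β)^{-σ}`, `σ = 99/100`. -/
def phi1 : ℝ → ℝ → ℝ := fun R β => (1+R)^4 / R^4 * Real.sin (2*β) ^ (-(99/100 : ℝ))

/-- The singular weight `φ₂ = (1+R)⁴R⁻⁴ sin(2β)^{-γ}`, `γ = 1 + α/10`. -/
def phi2 (α : ℝ) : ℝ → ℝ → ℝ := fun R β => (1+R)^4 / R^4 * Real.sin (2*β) ^ (-(1 + α/10))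

/-- The singular weight `ψ₁ = (1+R)⁴R⁻⁴ (sin β cos β)^{-σ}`. -/
def psi1 : ℝ → ℝ → ℝ := fun R β =>
  (1+R)^4 / R^4 * (Real.sin β * Real.cos β) ^ (-(99/100 : ℝ))

/-- The singular weight `ψ₂ = (1+R)⁴R⁻⁴ (sin β)^{-σ}(cos β)^{-γ}`. -/
def psi2 (α : ℝ) : ℝ → ℝ → ℝ := fun R β =>
  (1+R)^4 / R^4 * Real.sin β ^ (-(99/100 : ℝ)) * Real.cos β ^ (-(1 + α/10))

/-- `c_ω = −(2/(πα)) L₁₂(Ω)(0)`. -/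
def cω (α : ℝ) (Ω : ℝ → ℝ → ℝ) : ℝ := -(2/(Real.pi*α)) * L12 Ω 0

/-- The linearized operator `L₁`. -/
def opL1 (α : ℝ) (Ω η : ℝ → ℝ → ℝ) : ℝ → ℝ → ℝ := fun R β =>
  - DR Ω R β - (3/(1+R)) * Dbeta Ω R β - Ω R β + η R β
  + cω α Ω * (Ωbar α R β - DR (Ωbar α) R β)

/-- The linearized operator `L₂`. -/
def opL2 (α : ℝ) (Ω η : ℝ → ℝ → ℝ) : ℝ → ℝ → ℝ := fun R β =>
  - DR η R β - (3/(1+R)) * Dbeta η R β + (-2 + 3/(1+R)) * η R β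
  + (2/(Real.pi*α)) * tL12 Ω R * ηbar α R β
  + cω α Ω * (ηbar α R β - DR (ηbar α) R β)

/-- `ξ̄` in Cartesian variables. -/
def ξbarC (α : ℝ) (x y : ℝ) : ℝ :=
  -(18*α^2 / cst α) * ∫ z in Set.Ioo (0:ℝ) x,
      (y/(y^2+z^2)) * (z ^ α * (z^2+y^2) ^ (α/2) / (1 + (z^2+y^2) ^ (α/2))^4)

/-- `ξ̄` in the `(R,β)` variables, via `x = R^{1/α} cos β`, `y = R^{1/α} sin β`. -/
def ξbar (α : ℝ) : ℝ → ℝ → ℝ := fun R β =>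
  ξbarC α (R ^ (1/α) * Real.cos β) (R ^ (1/α) * Real.sin β)

/-- The linearized operator `L₃`. -/
def opL3 (α : ℝ) (Ω ξ : ℝ → ℝ → ℝ) : ℝ → ℝ → ℝ := fun R β =>
  - DR ξ R β - (3/(1+R)) * Dbeta ξ R β + (-2 - 3/(1+R)) * ξ R β
  - (2/(Real.pi*α)) * tL12 Ω R * ξbar α R β
  + cω α Ω * (3 * ξbar α R β - DR (ξbar α) R β)

/-- Weighted Sobolev norm `H^m` with radial weight `w1` and angular weight `w2`:
`‖f‖ = Σ_{0≤k≤m} ‖(D_R^k f)√w1‖₂ + Σ_{i+j≤m−1} ‖(D_R^i D_β^{j+1} f)√w2‖₂`. -/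
def Hnorm (m : ℕ) (w1 w2 : ℝ → ℝ → ℝ) (f : ℝ → ℝ → ℝ) : ℝ :=
  (∑ k ∈ Finset.range (m+1),
    norm2 (fun R β => DR^[k] f R β * Real.sqrt (w1 R β)))
  + ∑ p ∈ (Finset.range (m+1) ×ˢ Finset.range (m+1)).filter
      (fun p => p.1 + p.2 + 1 ≤ m),
      norm2 (fun R β => DR^[p.1] (Dbeta^[p.2+1] f) R β * Real.sqrt (w2 R β))

/-- Sup of `|f|` over the domain `(0,∞)×(0,π/2)`. -/
def supDom (f : ℝ → ℝ → ℝ) : ℝ :=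
  ⨆ (R : Set.Ioi (0:ℝ)) (β : Set.Ioo (0:ℝ) (Real.pi/2)), |f R.1 β.1|

/-- The weighted `C¹` norm. -/
def C1norm (α : ℝ) (f : ℝ → ℝ → ℝ) : ℝ :=
  supDom f + supDom (fun R β => (1+R)/R * DR f R β)
  + supDom (fun R β =>
      (1 + (R * Real.sin (2*β) ^ α) ^ (-(1/40 : ℝ))) * Dbeta f R β)

/-- Boundedness of `f` on the domain. -/
def BddDom (f : ℝ → ℝ → ℝ) : Prop :=
  ∃ M : ℝ, ∀ R ∈ Set.Ioi (0:ℝ), ∀ β ∈ Set.Ioo (0:ℝ) (Real.pi/2), |f R β| ≤ M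

/-- Finiteness of the weighted `C¹` norm. -/
def C1Fin (α : ℝ) (f : ℝ → ℝ → ℝ) : Prop :=
  BddDom f ∧ BddDom (fun R β => (1+R)/R * DR f R β) ∧
  BddDom (fun R β => (1 + (R * Real.sin (2*β) ^ α) ^ (-(1/40 : ℝ))) * Dbeta f R β)

/-- The weighted `W^{l,∞}` norm. -/
def Wnorm (α : ℝ) (l : ℕ) (f : ℝ → ℝ → ℝ) : ℝ :=
  (∑ k ∈ Finset.range (l+1), supDom (DR^[k] f))
  + ∑ p ∈ (Finset.range (l+1) ×ˢ Finset.range (l+1)).filter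
      (fun p => p.1 + p.2 ≤ l ∧ 1 ≤ p.2),
      supDom (fun R β => Real.sin (2*β) ^ (-(α/5)) *
        DR^[p.1] (fun R' β' => Dbeta^[p.2] f R' β' / (α/10 + Real.sin (2*β'))) R β)

/-- Finiteness of the `W^{l,∞}` norm. -/
def WFin (α : ℝ) (l : ℕ) (f : ℝ → ℝ → ℝ) : Prop :=
  (∀ k ≤ l, BddDom (DR^[k] f)) ∧
  ∀ k j : ℕ, k + j ≤ l → 1 ≤ j →
    BddDom (fun R β => Real.sin (2*β) ^ (-(α/5)) *
      DR^[k] (fun R' β' => Dbeta^[j] f R' β' / (α/10 + Real.sin (2*β'))) R β)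

/-- `I(f)(x,y) = ∫₀ˣ f(z,y)/z dz`. -/
def Ifun (f : ℝ → ℝ → ℝ) : ℝ → ℝ → ℝ := fun x y => ∫ z in Set.Ioo (0:ℝ) x, f z y / z

/-- `D_S g = (1/α)(z ∂_z g + y ∂_y g)` in Cartesian variables. -/
def DScart (α : ℝ) (g : ℝ → ℝ → ℝ) : ℝ → ℝ → ℝ := fun a b =>
  (1/α) * (a * deriv (fun a' => g a' b) a + b * deriv (fun b' => g a b') b)

/-- `D_τ g = 2y ∂_y g − 2α (y²/(y²+z²)) D_S g` in Cartesian variables. -/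
def DTcart (α : ℝ) (g : ℝ → ℝ → ℝ) : ℝ → ℝ → ℝ := fun a b =>
  2*b * deriv (fun b' => g a b') b - 2*α*(b^2/(b^2+a^2)) * DScart α g a b

/-!
`D_β` commutes with the transport operator `−D_R − (3/(1+R)) D_β`, so `(D_β Ω, D_β η)` solves the
linearized system with `Γ` replaced by `D_β Γ` in the nonlocal terms. Integrating by parts against
`φ₂` turns transport into the zeroth-order coefficient
`1/2 − 2/(1+R) − (3α/10) cos(2β)/(1+R)`; the resulting quadratic form in `(D_β Ω, D_β η)` is at most
`−(1/4 − α)` times the sum of squares, and the loss from `1/4` to `1/5` absorbs the nonlocal terms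
by Young's inequality. These terms are `a(R) D_β Γ(β)` with `D_β Γ = −2α sin²β cos^α β`. The factor
`sin²β` vanishes at `β = 0`, while at `β = π/2` the weight leaves `(cos β)^(19α/10 − 1)`, whose
integral is `O(1/α)`; hence `∫ (D_β Γ)² sin(2β)^(−γ) dβ = O(α² · 1/α) = O(α)`.
-/

section Calculus

lemma mul_mul_self_nonneg {a w : ℝ} (hw : 0 ≤ w) : 0 ≤ a * (a * w) := by
  rw [← mul_assoc]
  exact mul_nonneg (mul_self_nonneg a) hw

lemma integrable_mul_of_tsupport_subset {X : Type*} [TopologicalSpace X] [MeasurableSpace X]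
    [OpensMeasurableSpace X] {μ : Measure X} [IsFiniteMeasureOnCompacts μ] {U : Set X}
    {a g : X → ℝ} (hU : IsOpen U) (ha : ContinuousOn a U) (hg : Continuous g)
    (hgc : HasCompactSupport g) (hgU : tsupport g ⊆ U) : Integrable (fun x => a x * g x) μ := by
  have hcont : Continuous fun x => a x * g x := continuous_of_tsupport fun x hx =>
    (ha.continuousAt (hU.mem_nhds (hgU (tsupport_mul_subset_right hx)))).mul hg.continuousAt
  exact hcont.integrable_of_hasCompactSupport hgc.mul_left

section IntegrationByParts

variable {E : Type*} [NormedAddCommGroup E] [NormedSpace ℝ E] [MeasurableSpace E] {μ : Measure E}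
  {U : Set E} {a g : E → ℝ}

lemma integrable_mul_fderiv_of_tsupport_subset [OpensMeasurableSpace E]
    [IsFiniteMeasureOnCompacts μ] (hU : IsOpen U) (ha : ContinuousOn a U) (hg : ContDiff ℝ 1 g)
    (hgc : HasCompactSupport g) (hgU : tsupport g ⊆ U) (v : E) :
    Integrable (fun x => a x * fderiv ℝ g x v) μ :=
  integrable_mul_of_tsupport_subset hU ha
    ((hg.continuous_fderiv one_ne_zero).clm_apply continuous_const) (hgc.fderiv_apply ℝ v)
    ((tsupport_fderiv_apply_subset ℝ v).trans hgU)

lemma integrable_fderiv_mul_of_tsupport_subset [OpensMeasurableSpace E]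
    [IsFiniteMeasureOnCompacts μ] (hU : IsOpen U) (ha : ContDiffOn ℝ 1 a U) (hg : Continuous g)
    (hgc : HasCompactSupport g) (hgU : tsupport g ⊆ U) (v : E) :
    Integrable (fun x => fderiv ℝ a x v * g x) μ :=
  integrable_mul_of_tsupport_subset hU
    ((ha.continuousOn_fderiv_of_isOpen hU le_rfl).clm_apply continuousOn_const) hg hgc hgU

lemma setIntegral_mul_fderiv_eq_neg [FiniteDimensional ℝ E] [BorelSpace E] [μ.IsAddHaarMeasure]
    (hU : IsOpen U) (ha : ContDiffOn ℝ 1 a U) (hg : ContDiff ℝ 1 g) (hgc : HasCompactSupport g)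
    (hgU : tsupport g ⊆ U) (v : E) :
    ∫ x in U, a x * fderiv ℝ g x v ∂μ = -∫ x in U, fderiv ℝ a x v * g x ∂μ := by
  have hg_off : ∀ x ∉ U, g x = 0 := fun x hx => image_eq_zero_of_notMem_tsupport fun h => hx (hgU h)
  have hg'_off : ∀ x ∉ U, fderiv ℝ g x v = 0 := fun x hx =>
    image_eq_zero_of_notMem_tsupport (f := (fderiv ℝ g · v))
      fun h => hx (hgU (tsupport_fderiv_apply_subset ℝ v h))
  rw [setIntegral_eq_integral_of_forall_compl_eq_zero fun x hx => by rw [hg'_off x hx, mul_zero],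
    setIntegral_eq_integral_of_forall_compl_eq_zero fun x hx => by rw [hg_off x hx, mul_zero]]
  exact integral_mul_fderiv_eq_neg_fderiv_mul_of_integrable
    (integrable_fderiv_mul_of_tsupport_subset hU ha hg.continuous hgc hgU v)
    (integrable_mul_fderiv_of_tsupport_subset hU ha.continuousOn hg hgc hgU v)
    (integrable_mul_of_tsupport_subset hU ha.continuousOn hg.continuous hgc hgU)
    (fun x hx => (ha.contDiffAt (hU.mem_nhds (hgU hx))).differentiableAt one_ne_zero)
    (fun x _ => (hg.differentiable one_ne_zero).differentiableAt)

end IntegrationByParts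

section Slices

variable {𝕜 F : Type*} [NontriviallyNormedField 𝕜] [NormedAddCommGroup F] [NormedSpace 𝕜 F]
  {f : 𝕜 × 𝕜 → F} {x y : 𝕜}

lemma hasDerivAt_fst_slice (hf : DifferentiableAt 𝕜 f (x, y)) :
    HasDerivAt (fun s => f (s, y)) (fderiv 𝕜 f (x, y) (1, 0)) x :=
  hf.hasFDerivAt.comp_hasDerivAt x ((hasDerivAt_id x).prodMk (hasDerivAt_const x y))

lemma hasDerivAt_snd_slice (hf : DifferentiableAt 𝕜 f (x, y)) :
    HasDerivAt (fun t => f (x, t)) (fderiv 𝕜 f (x, y) (0, 1)) y :=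
  hf.hasFDerivAt.comp_hasDerivAt y ((hasDerivAt_const y x).prodMk (hasDerivAt_id y))

end Slices

lemma deriv_deriv_comm {f : ℝ → ℝ → ℝ} (hf : ContDiff ℝ 2 (Function.uncurry f)) (x y : ℝ) :
    deriv (fun t => deriv (fun s => f s t) x) y = deriv (fun s => deriv (fun t => f s t) y) x := by
  have hd : Differentiable ℝ (Function.uncurry f) := hf.differentiable two_ne_zero
  have hd' : DifferentiableAt ℝ (fderiv ℝ (Function.uncurry f)) (x, y) :=
    (hf.fderiv_right (m := 1) (by norm_num)).differentiable one_ne_zero _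
  have hfst : ∀ t, deriv (fun s => f s t) x = fderiv ℝ (Function.uncurry f) (x, t) (1, 0) :=
    fun t => (hasDerivAt_fst_slice (hd (x, t))).deriv
  have hsnd : ∀ s, deriv (fun t => f s t) y = fderiv ℝ (Function.uncurry f) (s, y) (0, 1) :=
    fun s => (hasDerivAt_snd_slice (hd (s, y))).deriv
  have hsymm : IsSymmSndFDerivAt ℝ (Function.uncurry f) (x, y) :=
    hf.contDiffAt.isSymmSndFDerivAt (by simp)
  simp only [hfst, hsnd]
  rw [((hasDerivAt_snd_slice hd').clm_apply (hasDerivAt_const y ((1 : ℝ), (0 : ℝ)))).deriv,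
    ((hasDerivAt_fst_slice hd').clm_apply (hasDerivAt_const x ((0 : ℝ), (1 : ℝ)))).deriv]
  simpa only [map_zero, add_zero] using hsymm.eq (0, 1) (1, 0)

lemma integral_Ioi_one_div_one_add_sq : ∫ x in Ioi (0 : ℝ), 1 / (1 + x) ^ 2 = 1 := by
  have hderiv : ∀ x ∈ Ici (0 : ℝ), HasDerivAt (fun x : ℝ => -(1 + x)⁻¹) (1 / (1 + x) ^ 2) x := by
    intro x (hx : 0 ≤ x)
    exact (((hasDerivAt_id x).const_add 1).inv (by simp only [id]; positivity)).neg.congr_deriv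
      (by simp [neg_div])
  have hnonneg : ∀ x ∈ Ioi (0 : ℝ), 0 ≤ 1 / (1 + x) ^ 2 := fun x _ => by positivity
  have hlim : Filter.Tendsto (fun x : ℝ => -(1 + x)⁻¹) Filter.atTop (nhds 0) := by
    simpa using (tendsto_inv_atTop_zero.comp
      (Filter.tendsto_atTop_add_const_left Filter.atTop (1 : ℝ) Filter.tendsto_id)).neg
  rw [integral_Ioi_of_hasDerivAt_of_nonneg' hderiv hnonneg hlim]
  norm_num

lemma integrableOn_one_div_one_add_sq : IntegrableOn (fun x : ℝ => 1 / (1 + x) ^ 2) (Ioi 0) :=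
  integrable_of_integral_eq_one integral_Ioi_one_div_one_add_sq

lemma integrableOn_sq_div_of_bounded {h : ℝ → ℝ} {a M : ℝ} (ha : 0 < a) (hcont : Continuous h)
    (hbound : ∀ x, |h x| ≤ M) (hzero : ∀ x ≤ a, h x = 0) :
    IntegrableOn (fun x => (h x / x) ^ 2) (Ioi 0) := by
  have hmajorant : IntegrableOn (fun x : ℝ => M ^ 2 * x ^ (-2 : ℝ)) (Ioi a) :=
    (integrableOn_Ioi_rpow_of_lt (by norm_num) ha).const_mul _
  have htail : IntegrableOn (fun x => (h x / x) ^ 2) (Ioi a) := by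
    refine hmajorant.mono' ((hcont.measurable.div measurable_id).pow_const 2).aestronglyMeasurable
      ((ae_restrict_iff' measurableSet_Ioi).2 (.of_forall fun x (hx : a < x) => ?_))
    have hx0 : 0 < x := ha.trans hx
    have hsq : h x ^ 2 ≤ M ^ 2 := sq_le_sq' (neg_le_of_abs_le (hbound x)) (le_of_abs_le (hbound x))
    rw [Real.norm_of_nonneg (sq_nonneg _), Real.rpow_neg hx0.le, Real.rpow_two, div_pow,
      div_eq_mul_inv]
    gcongr
  refine htail.of_forall_sdiff_eq_zero measurableSet_Ioi fun x hx => ?_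
  simp [hzero x (not_lt.1 hx.2)]

lemma sin_two_mul_pos {β : ℝ} (hβ : β ∈ Ioo 0 (π / 2)) : 0 < sin (2 * β) :=
  sin_pos_of_pos_of_lt_pi (by linarith [hβ.1]) (by linarith [hβ.2])

lemma cos_pos_of_mem_Ioo_zero {β : ℝ} (hβ : β ∈ Ioo 0 (π / 2)) : 0 < cos β :=
  cos_pos_of_mem_Ioo ⟨by linarith [hβ.1, pi_pos], hβ.2⟩

lemma sin_pos_of_mem_Ioo_zero {β : ℝ} (hβ : β ∈ Ioo 0 (π / 2)) : 0 < sin β :=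
  sin_pos_of_pos_of_lt_pi hβ.1 (by linarith [hβ.2, pi_pos])

lemma integral_sin_mul_cos_rpow {r : ℝ} (hr : -1 < r) :
    ∫ β in Ioo 0 (π / 2), sin β * cos β ^ r = 1 / (r + 1) := by
  have hr1 : 0 < r + 1 := by linarith
  have hpi : (0 : ℝ) ≤ π / 2 := by positivity
  have hcont : ContinuousOn (fun β => -(cos β ^ (r + 1) / (r + 1))) (Icc 0 (π / 2)) :=
    ((continuous_cos.rpow_const fun _ => Or.inr hr1.le).div_const _).neg.continuousOn
  have hderiv : ∀ β ∈ Ioo 0 (π / 2),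
      HasDerivAt (fun β => -(cos β ^ (r + 1) / (r + 1))) (sin β * cos β ^ r) β := fun β hβ =>
    (((hasDerivAt_cos β).rpow_const
      (Or.inl (cos_pos_of_mem_Ioo_zero hβ).ne')).div_const _).neg.congr_deriv <| by
      rw [add_sub_cancel_right]
      field_simp
  have hnonneg : ∀ β ∈ Ioo 0 (π / 2), 0 ≤ sin β * cos β ^ r := fun β hβ =>
    mul_nonneg (sin_pos_of_mem_Ioo_zero hβ).le (rpow_nonneg (cos_pos_of_mem_Ioo_zero hβ).le _)
  have hint := intervalIntegral.integrableOn_deriv_of_nonneg hcont hderiv hnonneg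
  rw [← integral_Ioc_eq_integral_Ioo, ← intervalIntegral.integral_of_le hpi,
    intervalIntegral.integral_eq_sub_of_hasDerivAt_of_le hpi hcont hderiv
      ((intervalIntegrable_iff_integrableOn_Ioc_of_le hpi).2 hint)]
  simp [hr1.ne']

lemma integrableOn_sin_mul_cos_rpow {r : ℝ} (hr : -1 < r) :
    IntegrableOn (fun β => sin β * cos β ^ r) (Ioo 0 (π / 2)) :=
  .of_integral_ne_zero <| by
    rw [integral_sin_mul_cos_rpow hr]
    exact one_div_ne_zero (by linarith)

end Calculus

section Domain

lemma isOpen_Qdom : IsOpen Qdom := isOpen_Ioi.prod isOpen_Ioo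

lemma inner2_eq_setIntegral {f g : ℝ → ℝ → ℝ}
    (hfg : IntegrableOn (fun p : ℝ × ℝ => f p.1 p.2 * g p.1 p.2) Qdom) :
    inner2 f g = ∫ p in Qdom, f p.1 p.2 * g p.1 p.2 :=
  (setIntegral_prod _ hfg).symm

lemma inner2_congr {f f' g g' : ℝ → ℝ → ℝ}
    (h : ∀ p ∈ Qdom, f p.1 p.2 * g p.1 p.2 = f' p.1 p.2 * g' p.1 p.2) :
    inner2 f g = inner2 f' g' :=
  setIntegral_congr_fun measurableSet_Ioi fun R hR =>
    setIntegral_congr_fun measurableSet_Ioo fun β hβ => h (R, β) ⟨hR, hβ⟩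

lemma inner2_mul_mul (a b c d : ℝ → ℝ) :
    inner2 (fun R β => a R * c β) (fun R β => b R * d β) =
      (∫ R in Ioi 0, a R * b R) * ∫ β in Ioo 0 (π / 2), c β * d β := by
  simp only [inner2, mul_mul_mul_comm, integral_const_mul, integral_mul_const]

lemma norm2_mul_sqrt_sq {f w : ℝ → ℝ → ℝ} (hw : ∀ p ∈ Qdom, 0 ≤ w p.1 p.2) :
    norm2 (fun R β => f R β * √(w R β)) ^ 2 = inner2 f (fun R β => f R β * w R β) := by
  have hnonneg : 0 ≤ inner2 (fun R β => f R β * √(w R β)) (fun R β => f R β * √(w R β)) :=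
    integral_nonneg fun R => integral_nonneg fun β => mul_self_nonneg _
  rw [norm2, sq_sqrt hnonneg]
  refine inner2_congr fun p hp => ?_
  rw [mul_mul_mul_comm, mul_self_sqrt (hw p hp), mul_assoc]

lemma normR_sq (h : ℝ → ℝ) : normR h ^ 2 = ∫ R in Ioi 0, h R ^ 2 :=
  sq_sqrt (integral_nonneg fun _ => sq_nonneg _)

variable {f : ℝ → ℝ → ℝ}

lemma suppIn.hasCompactSupport (hf : suppIn f) : HasCompactSupport (Function.uncurry f) := by
  obtain ⟨K, hK, -, hzero⟩ := hf
  exact .intro hK fun p hp => hzero p.1 p.2 hp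

lemma suppIn.tsupport_subset (hf : suppIn f) : tsupport (Function.uncurry f) ⊆ Qdom := by
  obtain ⟨K, hK, hKQ, hzero⟩ := hf
  refine (closure_minimal (fun p hp => ?_) hK.isClosed).trans hKQ
  exact not_imp_comm.1 (hzero p.1 p.2) hp

lemma suppIn.Dbeta (hf : suppIn f) : suppIn (Dbeta f) := by
  obtain ⟨K, hK, hKQ, hzero⟩ := hf
  refine ⟨K, hK, hKQ, fun R β hp => ?_⟩
  have hzero_near : (fun b => f R b) =ᶠ[nhds β] fun _ => 0 := by
    filter_upwards [(hK.isClosed.isOpen_compl.preimage (.prodMk_right R)).mem_nhds hp] with b hb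
    exact hzero R b hb
  rw [Paper.Dbeta, hzero_near.deriv_eq, deriv_const, mul_zero]

lemma suppIn.integrable_mul {a : ℝ × ℝ → ℝ} (hf : suppIn f)
    (hfc : Continuous (Function.uncurry f)) (ha : ContinuousOn a Qdom) :
    Integrable fun p : ℝ × ℝ => a p * f p.1 p.2 :=
  integrable_mul_of_tsupport_subset isOpen_Qdom ha hfc hf.hasCompactSupport hf.tsupport_subset

end Domain

section Operators

variable {f g : ℝ → ℝ → ℝ} {R β : ℝ}

lemma DR_eq_fderiv (hf : DifferentiableAt ℝ (Function.uncurry f) (R, β)) :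
    DR f R β = R * fderiv ℝ (Function.uncurry f) (R, β) (1, 0) :=
  congrArg (R * ·) (hasDerivAt_fst_slice hf).deriv

lemma Dbeta_eq_fderiv (hf : DifferentiableAt ℝ (Function.uncurry f) (R, β)) :
    Dbeta f R β = sin (2 * β) * fderiv ℝ (Function.uncurry f) (R, β) (0, 1) :=
  congrArg (sin (2 * β) * ·) (hasDerivAt_snd_slice hf).deriv

lemma contDiff_DR {n : ℕ} (hf : ContDiff ℝ (n + 1) (Function.uncurry f)) :
    ContDiff ℝ n (Function.uncurry (DR f)) := by
  have hd := hf.differentiable (by simp)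
  rw [show Function.uncurry (DR f) = fun p => p.1 * fderiv ℝ (Function.uncurry f) p (1, 0) from
    funext fun p => DR_eq_fderiv (hd p)]
  exact contDiff_fst.mul ((hf.fderiv_right le_rfl).clm_apply contDiff_const)

lemma contDiff_Dbeta {n : ℕ} (hf : ContDiff ℝ (n + 1) (Function.uncurry f)) :
    ContDiff ℝ n (Function.uncurry (Dbeta f)) := by
  have hd := hf.differentiable (by simp)
  rw [show Function.uncurry (Dbeta f) =
      fun p => sin (2 * p.2) * fderiv ℝ (Function.uncurry f) p (0, 1) from
    funext fun p => Dbeta_eq_fderiv (hd p)]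
  exact (contDiff_const.mul contDiff_snd).sin.mul
    ((hf.fderiv_right le_rfl).clm_apply contDiff_const)

lemma Dbeta_DR_comm (hf : ContDiff ℝ 2 (Function.uncurry f)) (R β : ℝ) :
    Dbeta (DR f) R β = DR (Dbeta f) R β := by
  simp only [Dbeta, DR, deriv_const_mul_field, deriv_deriv_comm hf]
  ring

/-- The transport part `−D_R − (3/(1+R)) D_β` shared by the linearized operators. -/
def transport (f : ℝ → ℝ → ℝ) : ℝ → ℝ → ℝ := fun R β => -DR f R β - 3 / (1 + R) * Dbeta f R β

lemma continuousOn_transport (hf : ContDiff ℝ 1 (Function.uncurry f)) :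
    ContinuousOn (Function.uncurry (transport f)) Qdom := by
  have hDR : Continuous (Function.uncurry (DR f)) := (contDiff_DR (n := 0) hf).continuous
  have hDβ : Continuous (Function.uncurry (Dbeta f)) := (contDiff_Dbeta (n := 0) hf).continuous
  have hspeed : ContinuousOn (fun p : ℝ × ℝ => 3 / (1 + p.1)) Qdom :=
    continuousOn_const.div (by fun_prop) fun p hp => by linarith [mem_Ioi.1 hp.1]
  exact hDR.neg.continuousOn.sub (hspeed.mul hDβ.continuousOn)

lemma Dbeta_transport_add (hf : ContDiff ℝ 2 (Function.uncurry f))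
    (hg : DifferentiableAt ℝ (fun b => g R b) β) :
    Dbeta (fun R β => transport f R β + g R β) R β = transport (Dbeta f) R β + Dbeta g R β := by
  have hDR : DifferentiableAt ℝ (fun b => DR f R b) β :=
    (hasDerivAt_snd_slice
      ((contDiff_DR (n := 1) hf).differentiable one_ne_zero (R, β))).differentiableAt
  have hDβ : DifferentiableAt ℝ (fun b => Dbeta f R b) β :=
    (hasDerivAt_snd_slice
      ((contDiff_Dbeta (n := 1) hf).differentiable one_ne_zero (R, β))).differentiableAt
  have hderiv := (hDR.hasDerivAt.neg.sub (hDβ.hasDerivAt.const_mul (3 / (1 + R)))).add hg.hasDerivAt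
  rw [transport, ← Dbeta_DR_comm hf]
  simp only [Dbeta] at hderiv ⊢
  rw [show deriv (fun b => transport f R b + g R b) β = _ from hderiv.deriv]
  ring

end Operators

section Energy

variable {α : ℝ} {u v A B : ℝ → ℝ → ℝ}

lemma phi2_nonneg (α : ℝ) {p : ℝ × ℝ} (hp : p ∈ Qdom) : 0 ≤ phi2 α p.1 p.2 := by
  have hsin := sin_two_mul_pos hp.2
  rw [phi2]
  positivity

lemma contDiffOn_phi2 (α : ℝ) : ContDiffOn ℝ 1 (Function.uncurry (phi2 α)) Qdom := by
  intro p hp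
  have hR : p.1 ^ 4 ≠ 0 := pow_ne_zero 4 (mem_Ioi.1 hp.1).ne'
  have hradial : ContDiffAt ℝ 1 (fun q : ℝ × ℝ => (1 + q.1) ^ 4 / q.1 ^ 4) p :=
    .div (by fun_prop) (by fun_prop) hR
  have hsin : ContDiffAt ℝ 1 (fun q : ℝ × ℝ => sin (2 * q.2)) p := by fun_prop
  exact (hradial.mul (hsin.rpow_const_of_ne (sin_two_mul_pos hp.2).ne')).contDiffWithinAt

lemma fderiv_radial_flux_phi2 (α : ℝ) {p : ℝ × ℝ} (hp : p ∈ Qdom) :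
    fderiv ℝ (fun q : ℝ × ℝ => q.1 * phi2 α q.1 q.2) p (1, 0) =
      (1 - 4 / (1 + p.1)) * phi2 α p.1 p.2 := by
  obtain ⟨R, β⟩ := p
  have hR : 0 < R := hp.1
  have hφ : DifferentiableAt ℝ (Function.uncurry (phi2 α)) (R, β) :=
    ((contDiffOn_phi2 α).contDiffAt (isOpen_Qdom.mem_nhds hp)).differentiableAt one_ne_zero
  refine (hasDerivAt_fst_slice (differentiableAt_fst.mul hφ)).unique ?_
  have hquot : HasDerivAt (fun r : ℝ => (1 + r) ^ 4 / r ^ 4) _ R :=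
    (((hasDerivAt_id R).const_add 1).pow 4).div ((hasDerivAt_id R).pow 4) (pow_ne_zero 4 hR.ne')
  refine ((hasDerivAt_id R).mul (hquot.mul_const (sin (2 * β) ^ (-(1 + α / 10))))).congr_deriv ?_
  simp only [id, phi2, Pi.pow_apply]
  field_simp
  ring

lemma fderiv_angular_flux_phi2 (α : ℝ) {p : ℝ × ℝ} (hp : p ∈ Qdom) :
    fderiv ℝ (fun q : ℝ × ℝ => 3 / (1 + q.1) * sin (2 * q.2) * phi2 α q.1 q.2) p (0, 1) =
      -(3 * α / 5 * (cos (2 * p.2) / (1 + p.1))) * phi2 α p.1 p.2 := by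
  obtain ⟨R, β⟩ := p
  have hR : 1 + R ≠ 0 := by linarith [mem_Ioi.1 hp.1]
  have hsin : 0 < sin (2 * β) := sin_two_mul_pos hp.2
  have hφ : DifferentiableAt ℝ (Function.uncurry (phi2 α)) (R, β) :=
    ((contDiffOn_phi2 α).contDiffAt (isOpen_Qdom.mem_nhds hp)).differentiableAt one_ne_zero
  have hspeed : DifferentiableAt ℝ (fun q : ℝ × ℝ => 3 / (1 + q.1) * sin (2 * q.2)) (R, β) := by
    fun_prop (disch := exact hR)
  refine (hasDerivAt_snd_slice (hspeed.mul hφ)).unique ?_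
  have hsin' : HasDerivAt (fun b => sin (2 * b)) (cos (2 * β) * (2 * 1)) β :=
    ((hasDerivAt_id β).const_mul 2).sin
  have hpow := hsin'.rpow_const (p := -(1 + α / 10)) (Or.inl hsin.ne')
  refine ((hsin'.const_mul (3 / (1 + R))).mul
    (hpow.const_mul ((1 + R) ^ 4 / R ^ 4))).congr_deriv ?_
  rw [rpow_sub_one hsin.ne']
  simp only [phi2]
  field_simp
  ring

lemma setIntegral_transport_mul {w : ℝ × ℝ → ℝ} (hw : ContDiffOn ℝ 1 w Qdom)
    (hu : ContDiff ℝ 1 (Function.uncurry u)) (husupp : suppIn u) :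
    ∫ p in Qdom, transport u p.1 p.2 * (u p.1 p.2 * w p) =
      ∫ p in Qdom, 1 / 2 * (fderiv ℝ (fun q => q.1 * w q) p (1, 0) +
        fderiv ℝ (fun q => 3 / (1 + q.1) * sin (2 * q.2) * w q) p (0, 1)) * u p.1 p.2 ^ 2 := by
  set flux : ℝ × ℝ → ℝ := fun q => 3 / (1 + q.1) * sin (2 * q.2) * w q
  set g : ℝ × ℝ → ℝ := fun q => Function.uncurry u q ^ 2 with hg_def
  have hspeed : ContDiffOn ℝ 1 (fun q : ℝ × ℝ => 3 / (1 + q.1)) Qdom :=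
    contDiffOn_const.div (by fun_prop) fun q hq => by linarith [mem_Ioi.1 hq.1]
  have hradial : ContDiffOn ℝ 1 (fun q => q.1 * w q) Qdom := contDiffOn_fst.mul hw
  have hangular : ContDiffOn ℝ 1 flux Qdom := (hspeed.mul (by fun_prop)).mul hw
  have hg : ContDiff ℝ 1 g := hu.pow 2
  have hgc : HasCompactSupport g := husupp.hasCompactSupport.comp_left (zero_pow two_ne_zero)
  have hgQ : tsupport g ⊆ Qdom :=
    (closure_mono fun q hq => pow_ne_zero_iff two_ne_zero |>.1 hq).trans husupp.tsupport_subset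
  have hpointwise : ∀ q ∈ Qdom, transport u q.1 q.2 * (u q.1 q.2 * w q) =
      -(1 / 2) * (q.1 * w q * fderiv ℝ g q (1, 0) + flux q * fderiv ℝ g q (0, 1)) := by
    intro q _
    have hdiff : DifferentiableAt ℝ (Function.uncurry u) q := hu.differentiable one_ne_zero q
    rw [transport, DR_eq_fderiv hdiff, Dbeta_eq_fderiv hdiff, hg_def, fderiv_fun_pow 2 hdiff]
    simp only [flux, Function.uncurry, smul_apply, smul_eq_mul]
    ring
  calc ∫ p in Qdom, transport u p.1 p.2 * (u p.1 p.2 * w p)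
      = -(1 / 2) * ((∫ p in Qdom, p.1 * w p * fderiv ℝ g p (1, 0)) +
          ∫ p in Qdom, flux p * fderiv ℝ g p (0, 1)) := by
        rw [setIntegral_congr_fun isOpen_Qdom.measurableSet hpointwise, integral_const_mul,
          integral_add
            (integrable_mul_fderiv_of_tsupport_subset isOpen_Qdom hradial.continuousOn hg hgc hgQ _)
            (integrable_mul_fderiv_of_tsupport_subset isOpen_Qdom hangular.continuousOn hg hgc
              hgQ _)]
    _ = 1 / 2 * ((∫ p in Qdom, fderiv ℝ (fun q => q.1 * w q) p (1, 0) * g p) +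
          ∫ p in Qdom, fderiv ℝ flux p (0, 1) * g p) := by
        rw [setIntegral_mul_fderiv_eq_neg isOpen_Qdom hradial hg hgc hgQ,
          setIntegral_mul_fderiv_eq_neg isOpen_Qdom hangular hg hgc hgQ]
        ring
    _ = _ := by
        rw [← integral_add
            (integrable_fderiv_mul_of_tsupport_subset isOpen_Qdom hradial hg.continuous hgc hgQ _)
            (integrable_fderiv_mul_of_tsupport_subset isOpen_Qdom hangular hg.continuous hgc hgQ _),
          ← integral_const_mul]
        simp only [mul_assoc, add_mul, hg_def, Function.uncurry]

/-- The zeroth-order coefficient which `transport` leaves in `L²(φ₂)` after integration by parts: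
half the divergence of `φ₂ · (R, 3 sin(2β)/(1+R))`, divided by `φ₂`. -/
def transportDamping (α R β : ℝ) : ℝ :=
  1 / 2 - 2 / (1 + R) - 3 * α / 10 * (cos (2 * β) / (1 + R))

lemma continuousOn_transportDamping (α : ℝ) :
    ContinuousOn (Function.uncurry (transportDamping α)) Qdom := by
  have hR : ∀ p ∈ Qdom, 1 + p.1 ≠ 0 := fun p hp => by linarith [mem_Ioi.1 hp.1]
  exact (continuousOn_const.sub (continuousOn_const.div (by fun_prop) hR)).sub
    (continuousOn_const.mul (ContinuousOn.div (by fun_prop) (by fun_prop) hR))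

lemma suppIn.integrableOn_mul_phi2 {f : ℝ → ℝ → ℝ} (husupp : suppIn u)
    (hu : Continuous (Function.uncurry u)) (hf : ContinuousOn (Function.uncurry f) Qdom) :
    IntegrableOn (fun p : ℝ × ℝ => f p.1 p.2 * (u p.1 p.2 * phi2 α p.1 p.2)) Qdom := by
  refine (husupp.integrable_mul hu
    (hf.mul (contDiffOn_phi2 α).continuousOn)).integrableOn.congr_fun (fun p _ => ?_)
    isOpen_Qdom.measurableSet
  simp only [Pi.mul_apply, Function.uncurry]
  ring

lemma inner2_transport_add {F : ℝ → ℝ → ℝ} (hu : ContDiff ℝ 1 (Function.uncurry u))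
    (husupp : suppIn u) (hF : ContinuousOn (Function.uncurry F) Qdom) :
    inner2 (fun R β => transport u R β + F R β) (fun R β => u R β * phi2 α R β) =
      ∫ p in Qdom, (transportDamping α p.1 p.2 * u p.1 p.2 + F p.1 p.2) *
        (u p.1 p.2 * phi2 α p.1 p.2) := by
  have htransport := continuousOn_transport hu
  have hdamped := (continuousOn_transportDamping α).mul hu.continuous.continuousOn
  have henergy : ∫ p in Qdom, transport u p.1 p.2 * (u p.1 p.2 * phi2 α p.1 p.2) =
      ∫ p in Qdom, transportDamping α p.1 p.2 * u p.1 p.2 * (u p.1 p.2 * phi2 α p.1 p.2) := by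
    rw [setIntegral_transport_mul (w := fun p => phi2 α p.1 p.2) (contDiffOn_phi2 α) hu husupp]
    refine setIntegral_congr_fun isOpen_Qdom.measurableSet fun p hp => ?_
    simp only [fderiv_radial_flux_phi2 α hp, fderiv_angular_flux_phi2 α hp, transportDamping]
    ring
  have hint := fun {f : ℝ → ℝ → ℝ} (hf : ContinuousOn (Function.uncurry f) Qdom) =>
    husupp.integrableOn_mul_phi2 (α := α) hu.continuous hf
  rw [inner2_eq_setIntegral (hint (f := fun R β => transport u R β + F R β) (htransport.add hF))]
  simp only [add_mul]
  rw [integral_add (hint htransport) (hint hF), henergy,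
    ← integral_add (hint (f := fun R β => transportDamping α R β * u R β) hdamped) (hint hF)]

/-- With `s = 1/(1+R)` and `c = cos(2β)`, this is the coercivity of the zeroth-order terms. -/
lemma quadratic_form_le {α s c : ℝ} (hα : 0 ≤ α) (hs : s ∈ Icc 0 1) (hc : -1 ≤ c) (u v A B : ℝ) :
    (1 / 2 - 2 * s - 3 * α / 10 * (c * s)) * (u ^ 2 + v ^ 2) - u ^ 2 + u * v
        + (-2 + 3 * s) * v ^ 2 + A * u + B * v
      ≤ -(1 / 5 - α) * (u ^ 2 + v ^ 2) + 5 * (A ^ 2 + B ^ 2) := by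
  have hcoercive : (1 / 2 - 2 * s) * (u ^ 2 + v ^ 2) - u ^ 2 + u * v + (-2 + 3 * s) * v ^ 2
      ≤ -(1 / 4) * (u ^ 2 + v ^ 2) := by
    have hs_part : 0 ≤ s * ((v / 2 - u) ^ 2 + 5 / 4 * u ^ 2) := mul_nonneg hs.1 (by positivity)
    have hs_compl : 0 ≤ (1 - s) * ((u / 2 - v) ^ 2 + 1 / 4 * v ^ 2) :=
      mul_nonneg (sub_nonneg.2 hs.2) (by positivity)
    linarith
  have hswirl : -(3 * α / 10 * (c * s)) * (u ^ 2 + v ^ 2) ≤ α * (u ^ 2 + v ^ 2) := by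
    have hcs : 0 ≤ α * (s * (1 + c)) := mul_nonneg hα (mul_nonneg hs.1 (by linarith))
    have hs_le : 0 ≤ α * (1 - s) := mul_nonneg hα (sub_nonneg.2 hs.2)
    exact mul_le_mul_of_nonneg_right (by linarith) (by positivity)
  have hyoung : A * u + B * v ≤ 1 / 20 * (u ^ 2 + v ^ 2) + 5 * (A ^ 2 + B ^ 2) := by
    linarith [sq_nonneg (A - u / 10), sq_nonneg (B - v / 10)]
  linarith

lemma damped_density_le (hα : 0 ≤ α) {p : ℝ × ℝ} (hp : p ∈ Qdom) (u v A B : ℝ) :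
    (transportDamping α p.1 p.2 * u + (-u + v + A)) * (u * phi2 α p.1 p.2) +
        (transportDamping α p.1 p.2 * v + ((-2 + 3 / (1 + p.1)) * v + B)) * (v * phi2 α p.1 p.2) ≤
      -(1 / 5 - α) * (u * (u * phi2 α p.1 p.2) + v * (v * phi2 α p.1 p.2)) +
        5 * (A * (A * phi2 α p.1 p.2) + B * (B * phi2 α p.1 p.2)) := by
  have hR : 0 < p.1 := hp.1
  have hs : 1 / (1 + p.1) ∈ Icc 0 1 :=
    ⟨by positivity, div_le_one_of_le₀ (by linarith) (by linarith)⟩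
  have hquad := mul_le_mul_of_nonneg_right
    (quadratic_form_le hα hs (neg_one_le_cos (2 * p.2)) u v A B) (phi2_nonneg α hp)
  simp only [transportDamping]
  linear_combination hquad

lemma weighted_energy_estimate (hα : 0 ≤ α) (hu : ContDiff ℝ 1 (Function.uncurry u))
    (hv : ContDiff ℝ 1 (Function.uncurry v)) (husupp : suppIn u) (hvsupp : suppIn v)
    (hA : ContinuousOn (Function.uncurry A) Qdom) (hB : ContinuousOn (Function.uncurry B) Qdom)
    (hAint : IntegrableOn (fun p => A p.1 p.2 * (A p.1 p.2 * phi2 α p.1 p.2)) Qdom)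
    (hBint : IntegrableOn (fun p => B p.1 p.2 * (B p.1 p.2 * phi2 α p.1 p.2)) Qdom) :
    inner2 (fun R β => transport u R β + (-u R β + v R β + A R β))
        (fun R β => u R β * phi2 α R β) +
      inner2 (fun R β => transport v R β + ((-2 + 3 / (1 + R)) * v R β + B R β))
        (fun R β => v R β * phi2 α R β) ≤
    -(1 / 5 - α) * (norm2 (fun R β => u R β * √(phi2 α R β)) ^ 2 +
        norm2 (fun R β => v R β * √(phi2 α R β)) ^ 2) +
      5 * (norm2 (fun R β => A R β * √(phi2 α R β)) ^ 2 +
        norm2 (fun R β => B R β * √(phi2 α R β)) ^ 2) := by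
  have huc := hu.continuous.continuousOn (s := Qdom)
  have hvc := hv.continuous.continuousOn (s := Qdom)
  have hspeed : ContinuousOn (fun p : ℝ × ℝ => 3 / (1 + p.1)) Qdom :=
    continuousOn_const.div (by fun_prop) fun p hp => by linarith [mem_Ioi.1 hp.1]
  have hF : ContinuousOn (Function.uncurry fun R β => -u R β + v R β + A R β) Qdom :=
    (huc.neg.add hvc).add hA
  have hG : ContinuousOn (Function.uncurry fun R β => (-2 + 3 / (1 + R)) * v R β + B R β) Qdom :=
    ((continuousOn_const.add hspeed).mul hvc).add hB
  have hdamping := continuousOn_transportDamping α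
  have hFint := husupp.integrableOn_mul_phi2 (α := α) (f := fun R β => transportDamping α R β *
    u R β + (-u R β + v R β + A R β)) hu.continuous ((hdamping.mul huc).add hF)
  have hGint := hvsupp.integrableOn_mul_phi2 (α := α) (f := fun R β => transportDamping α R β *
    v R β + ((-2 + 3 / (1 + R)) * v R β + B R β)) hv.continuous ((hdamping.mul hvc).add hG)
  have huint := husupp.integrableOn_mul_phi2 (α := α) hu.continuous huc
  have hvint := hvsupp.integrableOn_mul_phi2 (α := α) hv.continuous hvc
  have huvint := (huint.fun_add hvint).const_mul (-(1 / 5 - α))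
  have hABint := (hAint.fun_add hBint).const_mul 5
  simp only [norm2_mul_sqrt_sq fun _ hp => phi2_nonneg α hp]
  rw [inner2_transport_add hu husupp hF, inner2_transport_add hv hvsupp hG,
    inner2_eq_setIntegral huint, inner2_eq_setIntegral hvint, inner2_eq_setIntegral hAint,
    inner2_eq_setIntegral hBint, ← integral_add hFint hGint, ← integral_add huint hvint,
    ← integral_add hAint hBint, ← integral_const_mul, ← integral_const_mul,
    ← integral_add huvint hABint]
  exact setIntegral_mono_on (hFint.add hGint) (huvint.add hABint) isOpen_Qdom.measurableSet
    fun p hp => damped_density_le hα hp _ _ _ _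

end Energy

section Profiles

variable {α R β : ℝ} {Ω η : ℝ → ℝ → ℝ}

lemma cst_eq (hα : -2 < α) : cst α = 4 / (π * (α + 2)) := by
  have hintegrand : ∀ β ∈ Ioo 0 (π / 2), Γf α β * sin (2 * β) = 2 * (sin β * cos β ^ (α + 1)) := by
    intro β hβ
    rw [Γf, sin_two_mul, rpow_add_one (cos_pos_of_mem_Ioo_zero hβ).ne']
    ring
  have hα2 : α + 2 ≠ 0 := by linarith
  rw [cst, setIntegral_congr_fun measurableSet_Ioo hintegrand, integral_const_mul,
    integral_sin_mul_cos_rpow (by linarith), show α + 1 + 1 = α + 2 by ring]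
  field_simp
  ring

lemma two_div_pi_mul_div_cst (hα : 0 < α) : 2 / (π * α) * (α / cst α) = (α + 2) / 2 := by
  rw [cst_eq (by linarith)]
  field_simp
  ring

lemma Ωbar_sub_DR (α β : ℝ) (hR : 0 < R) :
    Ωbar α R β - DR (Ωbar α) R β = α / cst α * Γf α β * (6 * R ^ 2 / (1 + R) ^ 3) := by
  have hradial : HasDerivAt (fun r : ℝ => 3 * r / (1 + r) ^ 2) _ R :=
    ((hasDerivAt_id R).const_mul 3).div (((hasDerivAt_id R).const_add 1).pow 2) (by positivity)
  rw [DR, show deriv (fun r => Ωbar α r β) R = _ from (hradial.const_mul _).deriv, Ωbar]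
  simp only [id]
  field_simp
  ring

lemma ηbar_sub_DR (α β : ℝ) (hR : 0 < R) :
    ηbar α R β - DR (ηbar α) R β = α / cst α * Γf α β * (18 * R ^ 2 / (1 + R) ^ 4) := by
  have hradial : HasDerivAt (fun r : ℝ => 6 * r / (1 + r) ^ 3) _ R :=
    ((hasDerivAt_id R).const_mul 6).div (((hasDerivAt_id R).const_add 1).pow 3) (by positivity)
  rw [DR, show deriv (fun r => ηbar α r β) R = _ from (hradial.const_mul _).deriv, ηbar]
  simp only [id]
  field_simp
  ring

/-- The radial factor of the nonlocal part of `L₁(Ω,η)`, which has the form `a(R) Γ(β)`. -/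
def forcingL1 (α : ℝ) (Ω : ℝ → ℝ → ℝ) (R : ℝ) : ℝ :=
  -((α + 2) / 2 * (L12 Ω 0 * (6 * R ^ 2 / (1 + R) ^ 3)))

/-- The radial factor of the nonlocal part of `L₂(Ω,η)`, which has the form `a(R) Γ(β)`. -/
def forcingL2 (α : ℝ) (Ω : ℝ → ℝ → ℝ) (R : ℝ) : ℝ :=
  (α + 2) / 2 * (tL12 Ω R * (6 * R / (1 + R) ^ 3) - L12 Ω 0 * (18 * R ^ 2 / (1 + R) ^ 4))

lemma opL1_eq_transport_add (hα : 0 < α) (hR : 0 < R) (β : ℝ) :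
    opL1 α Ω η R β = transport Ω R β + (-Ω R β + η R β + forcingL1 α Ω R * Γf α β) := by
  rw [opL1, Ωbar_sub_DR α β hR, cω, transport, forcingL1, ← two_div_pi_mul_div_cst hα]
  ring

lemma opL2_eq_transport_add (hα : 0 < α) (hR : 0 < R) (β : ℝ) :
    opL2 α Ω η R β =
      transport η R β + ((-2 + 3 / (1 + R)) * η R β + forcingL2 α Ω R * Γf α β) := by
  rw [opL2, ηbar_sub_DR α β hR, cω, transport, forcingL2, ← two_div_pi_mul_div_cst hα, ηbar]
  ring

/-- The angular derivative `D_β Γ` of the profile `Γ`, in closed form. -/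
def DbetaΓ (α β : ℝ) : ℝ := -2 * α * sin β ^ 2 * cos β ^ α

lemma continuous_DbetaΓ (hα : 0 ≤ α) : Continuous (DbetaΓ α) :=
  Continuous.mul (by fun_prop) (continuous_cos.rpow_const fun _ => Or.inr hα)

lemma differentiableAt_Γf (α : ℝ) (hβ : β ∈ Ioo 0 (π / 2)) : DifferentiableAt ℝ (Γf α) β :=
  differentiable_cos.differentiableAt.rpow_const (Or.inl (cos_pos_of_mem_Ioo_zero hβ).ne')

lemma sin_two_mul_mul_deriv_Γf (α : ℝ) (hβ : β ∈ Ioo 0 (π / 2)) :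
    sin (2 * β) * deriv (Γf α) β = DbetaΓ α β := by
  have hcos := (cos_pos_of_mem_Ioo_zero hβ).ne'
  rw [show deriv (Γf α) β = _ from ((hasDerivAt_cos β).rpow_const (Or.inl hcos)).deriv, DbetaΓ,
    rpow_sub_one hcos, sin_two_mul]
  field_simp

lemma Dbeta_opL1 (hα : 0 < α) (hΩ : ContDiff ℝ 2 (Function.uncurry Ω))
    (hη : ContDiff ℝ 1 (Function.uncurry η)) {p : ℝ × ℝ} (hp : p ∈ Qdom) :
    Dbeta (opL1 α Ω η) p.1 p.2 = transport (Dbeta Ω) p.1 p.2 +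
      (-Dbeta Ω p.1 p.2 + Dbeta η p.1 p.2 + forcingL1 α Ω p.1 * DbetaΓ α p.2) := by
  obtain ⟨R, β⟩ := p
  have hΩβ : DifferentiableAt ℝ (fun b => Ω R b) β :=
    (hasDerivAt_snd_slice (hΩ.differentiable two_ne_zero (R, β))).differentiableAt
  have hηβ : DifferentiableAt ℝ (fun b => η R b) β :=
    (hasDerivAt_snd_slice (hη.differentiable one_ne_zero (R, β))).differentiableAt
  have hderiv := (hΩβ.hasDerivAt.neg.add hηβ.hasDerivAt).add
    ((differentiableAt_Γf α hp.2).hasDerivAt.const_mul (forcingL1 α Ω R))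
  calc Dbeta (opL1 α Ω η) R β
      = Dbeta (fun R β => transport Ω R β + (-Ω R β + η R β + forcingL1 α Ω R * Γf α β)) R β := by
        simp only [Dbeta, opL1_eq_transport_add hα hp.1]
    _ = transport (Dbeta Ω) R β +
          Dbeta (fun R β => -Ω R β + η R β + forcingL1 α Ω R * Γf α β) R β :=
        Dbeta_transport_add hΩ hderiv.differentiableAt
    _ = _ := by
        rw [← sin_two_mul_mul_deriv_Γf α hp.2]
        simp only [Dbeta]
        rw [show deriv (fun b => -Ω R b + η R b + forcingL1 α Ω R * Γf α b) β = _ from hderiv.deriv]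
        ring

lemma Dbeta_opL2 (hα : 0 < α) (hη : ContDiff ℝ 2 (Function.uncurry η)) {p : ℝ × ℝ}
    (hp : p ∈ Qdom) :
    Dbeta (opL2 α Ω η) p.1 p.2 = transport (Dbeta η) p.1 p.2 +
      ((-2 + 3 / (1 + p.1)) * Dbeta η p.1 p.2 + forcingL2 α Ω p.1 * DbetaΓ α p.2) := by
  obtain ⟨R, β⟩ := p
  have hηβ : DifferentiableAt ℝ (fun b => η R b) β :=
    (hasDerivAt_snd_slice (hη.differentiable two_ne_zero (R, β))).differentiableAt
  have hderiv := (hηβ.hasDerivAt.const_mul (-2 + 3 / (1 + R))).add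
    ((differentiableAt_Γf α hp.2).hasDerivAt.const_mul (forcingL2 α Ω R))
  calc Dbeta (opL2 α Ω η) R β
      = Dbeta (fun R β => transport η R β +
          ((-2 + 3 / (1 + R)) * η R β + forcingL2 α Ω R * Γf α β)) R β := by
        simp only [Dbeta, opL2_eq_transport_add hα hp.1]
    _ = transport (Dbeta η) R β +
          Dbeta (fun R β => (-2 + 3 / (1 + R)) * η R β + forcingL2 α Ω R * Γf α β) R β :=
        Dbeta_transport_add hη hderiv.differentiableAt
    _ = _ := by
        rw [← sin_two_mul_mul_deriv_Γf α hp.2]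
        simp only [Dbeta]
        rw [show deriv (fun b => (-2 + 3 / (1 + R)) * η R b + forcingL2 α Ω R * Γf α b) β = _ from
          hderiv.deriv]
        ring

lemma DbetaΓ_sq_mul_rpow_le (hα : 0 ≤ α) (hα20 : α ≤ 20) (hβ : β ∈ Ioo 0 (π / 2)) :
    DbetaΓ α β * (DbetaΓ α β * sin (2 * β) ^ (-(1 + α / 10))) ≤
      4 * α ^ 2 * (sin β * cos β ^ (19 / 10 * α - 1)) := by
  have hsin := sin_pos_of_mem_Ioo_zero hβ
  have hcos := cos_pos_of_mem_Ioo_zero hβ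
  have htwo : (2 : ℝ) ^ (-(1 + α / 10)) ≤ 1 :=
    rpow_le_one_of_one_le_of_nonpos (by norm_num) (by linarith)
  have hsin_pow : sin β ^ 4 * sin β ^ (-(1 + α / 10)) ≤ sin β := by
    rw [← rpow_natCast, ← rpow_add hsin]
    have hexp : 1 ≤ ((4 : ℕ) : ℝ) + -(1 + α / 10) := by
      push_cast
      linarith
    simpa only [rpow_one] using rpow_le_rpow_of_exponent_ge hsin (sin_le_one β) hexp
  have hcos_pow : (cos β ^ α) ^ 2 * cos β ^ (-(1 + α / 10)) = cos β ^ (19 / 10 * α - 1) := by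
    rw [← rpow_natCast, ← rpow_mul hcos.le, ← rpow_add hcos]
    congr 1
    push_cast
    ring
  have hweight : sin (2 * β) ^ (-(1 + α / 10)) =
      2 ^ (-(1 + α / 10)) * sin β ^ (-(1 + α / 10)) * cos β ^ (-(1 + α / 10)) := by
    rw [sin_two_mul, mul_rpow (by positivity) hcos.le, mul_rpow (by norm_num) hsin.le]
  calc DbetaΓ α β * (DbetaΓ α β * sin (2 * β) ^ (-(1 + α / 10)))
      = 4 * α ^ 2 * (2 ^ (-(1 + α / 10)) * (sin β ^ 4 * sin β ^ (-(1 + α / 10))) *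
          ((cos β ^ α) ^ 2 * cos β ^ (-(1 + α / 10)))) := by
        rw [hweight, DbetaΓ]
        ring
    _ ≤ 4 * α ^ 2 * (1 * sin β * cos β ^ (19 / 10 * α - 1)) := by
        rw [hcos_pow]
        gcongr
    _ = _ := by rw [one_mul]

lemma integrableOn_DbetaΓ_sq (hα : 0 < α) (hα20 : α ≤ 20) :
    IntegrableOn (fun β => DbetaΓ α β * (DbetaΓ α β * sin (2 * β) ^ (-(1 + α / 10))))
      (Ioo 0 (π / 2)) := by
  have hprofile := (continuous_DbetaΓ hα.le).continuousOn (s := Ioo 0 (π / 2))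
  have hweight : ContinuousOn (fun β => sin (2 * β) ^ (-(1 + α / 10))) (Ioo 0 (π / 2)) :=
    ContinuousOn.rpow_const (by fun_prop) fun β hβ => Or.inl (sin_two_mul_pos hβ).ne'
  have hexp : -1 < 19 / 10 * α - 1 := by linarith
  refine ((integrableOn_sin_mul_cos_rpow hexp).const_mul (4 * α ^ 2)).mono'
    ((hprofile.mul (hprofile.mul hweight)).aestronglyMeasurable measurableSet_Ioo)
    ((ae_restrict_iff' measurableSet_Ioo).2 (.of_forall fun β hβ => ?_))
  rw [norm_of_nonneg (mul_mul_self_nonneg (rpow_nonneg (sin_two_mul_pos hβ).le _))]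
  exact DbetaΓ_sq_mul_rpow_le hα.le hα20 hβ

lemma integral_DbetaΓ_sq_le (hα : 0 < α) (hα20 : α ≤ 20) :
    ∫ β in Ioo 0 (π / 2), DbetaΓ α β * (DbetaΓ α β * sin (2 * β) ^ (-(1 + α / 10))) ≤
      40 / 19 * α := by
  have hexp : -1 < 19 / 10 * α - 1 := by linarith
  calc ∫ β in Ioo 0 (π / 2), DbetaΓ α β * (DbetaΓ α β * sin (2 * β) ^ (-(1 + α / 10)))
      ≤ ∫ β in Ioo 0 (π / 2), 4 * α ^ 2 * (sin β * cos β ^ (19 / 10 * α - 1)) :=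
        setIntegral_mono_on (integrableOn_DbetaΓ_sq hα hα20)
          ((integrableOn_sin_mul_cos_rpow hexp).const_mul _) measurableSet_Ioo
          fun β hβ => DbetaΓ_sq_mul_rpow_le hα.le hα20 hβ
    _ = 40 / 19 * α := by
        rw [integral_const_mul, integral_sin_mul_cos_rpow hexp, sub_add_cancel]
        field_simp
        norm_num

end Profiles

section Forcing

variable {α R : ℝ} {Ω : ℝ → ℝ → ℝ}

/-- The density of `L₁₂` in the radial variable: `L₁₂(Ω)(R) = ∫_R^∞ angularMoment Ω s ds`. -/
def angularMoment (Ω : ℝ → ℝ → ℝ) (s : ℝ) : ℝ :=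
  ∫ β in Ioo 0 (π / 2), Ω s β * sin (2 * β) / s

lemma integrable_angularMoment (hΩ : Continuous (Function.uncurry Ω)) (hsupp : suppIn Ω) :
    Integrable (angularMoment Ω) := by
  have hkernel : ContinuousOn (fun p : ℝ × ℝ => sin (2 * p.2) / p.1) Qdom :=
    ContinuousOn.div (by fun_prop) continuousOn_fst fun p hp => (mem_Ioi.1 hp.1).ne'
  have hint : IntegrableOn (fun p : ℝ × ℝ => Ω p.1 p.2 * sin (2 * p.2) / p.1)
      (univ ×ˢ Ioo 0 (π / 2)) := by
    refine (hsupp.integrable_mul hΩ hkernel).integrableOn.congr_fun (fun p _ => ?_)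
      (MeasurableSet.univ.prod measurableSet_Ioo)
    ring
  rw [IntegrableOn, Measure.volume_eq_prod, ← Measure.prod_restrict, Measure.restrict_univ] at hint
  exact hint.integral_prod_left

lemma exists_angularMoment_eq_zero (hsupp : suppIn Ω) :
    ∃ a > 0, ∀ s ≤ a, angularMoment Ω s = 0 := by
  obtain ⟨K, hK, hKQ, hzero⟩ := hsupp
  obtain ⟨a, ha, hKa⟩ := hK.exists_forall_le' continuousOn_fst fun p hp => (hKQ hp).1
  refine ⟨a / 2, half_pos ha, fun s hs => ?_⟩
  have hΩs : ∀ β, Ω s β = 0 := fun β => hzero s β fun hmem => by linarith [hKa (s, β) hmem]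
  simp only [angularMoment, hΩs, zero_mul, zero_div, integral_zero]

lemma tL12_eq_neg_intervalIntegral (hint : Integrable (angularMoment Ω)) (R : ℝ) :
    tL12 Ω R = -∫ s in 0..R, angularMoment Ω s := by
  rw [← intervalIntegral.integral_Ioi_sub_Ioi' hint.integrableOn hint.integrableOn, neg_sub]
  rfl

lemma continuous_tL12 (hint : Integrable (angularMoment Ω)) : Continuous (tL12 Ω) := by
  rw [funext (tL12_eq_neg_intervalIntegral hint)]
  exact (hint.continuous_primitive 0).neg

lemma integrableOn_sq_tL12_div (hΩ : Continuous (Function.uncurry Ω)) (hsupp : suppIn Ω) :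
    IntegrableOn (fun R => (tL12 Ω R / R) ^ 2) (Ioi 0) := by
  have hint := integrable_angularMoment hΩ hsupp
  obtain ⟨a, ha, hzero⟩ := exists_angularMoment_eq_zero hsupp
  refine integrableOn_sq_div_of_bounded (M := ∫ s, |angularMoment Ω s|) ha (continuous_tL12 hint)
    (fun R => ?_) fun R hR => ?_
  · rw [tL12_eq_neg_intervalIntegral hint, abs_neg]
    exact intervalIntegral.norm_integral_le_integral_norm_uIoc.trans
      (setIntegral_le_integral hint.norm (.of_forall fun s => norm_nonneg _))
  · have hvanish : ∀ s ∈ uIcc 0 R, angularMoment Ω s = 0 := fun s hs =>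
      hzero s (hs.2.trans (max_le ha.le hR))
    rw [tL12_eq_neg_intervalIntegral hint, intervalIntegral.integral_congr hvanish]
    simp only [intervalIntegral.integral_zero, neg_zero]

lemma forcingL1_sq_mul_weight (α : ℝ) (Ω : ℝ → ℝ → ℝ) (hR : 0 < R) :
    forcingL1 α Ω R * (forcingL1 α Ω R * ((1 + R) ^ 4 / R ^ 4)) =
      9 * (α + 2) ^ 2 * L12 Ω 0 ^ 2 * (1 / (1 + R) ^ 2) := by
  rw [forcingL1]
  field_simp
  ring

lemma forcingL2_sq_mul_weight_le (α : ℝ) (Ω : ℝ → ℝ → ℝ) (hR : 0 < R) :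
    forcingL2 α Ω R * (forcingL2 α Ω R * ((1 + R) ^ 4 / R ^ 4)) ≤
      (α + 2) ^ 2 * (18 * (tL12 Ω R / R) ^ 2 + 162 * L12 Ω 0 ^ 2 * (1 / (1 + R) ^ 2)) := by
  have hdecay : 1 / (1 + R) ^ 2 ≤ 1 := div_le_one_of_le₀ (by nlinarith) (by positivity)
  calc forcingL2 α Ω R * (forcingL2 α Ω R * ((1 + R) ^ 4 / R ^ 4))
      = (α + 2) ^ 2 *
          (9 * (tL12 Ω R / R - 3 * L12 Ω 0 * (1 / (1 + R))) ^ 2 * (1 / (1 + R) ^ 2)) := by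
        rw [forcingL2]
        field_simp
        ring
    _ ≤ (α + 2) ^ 2 * (18 * (tL12 Ω R / R) ^ 2 + 162 * L12 Ω 0 ^ 2 * (1 / (1 + R) ^ 2)) := by
        gcongr
        calc 9 * (tL12 Ω R / R - 3 * L12 Ω 0 * (1 / (1 + R))) ^ 2 * (1 / (1 + R) ^ 2)
            ≤ 9 * (tL12 Ω R / R - 3 * L12 Ω 0 * (1 / (1 + R))) ^ 2 * 1 := by gcongr
          _ ≤ _ := by
              have hsq := sq_nonneg (tL12 Ω R / R + 3 * L12 Ω 0 * (1 / (1 + R)))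
              have hinv : (1 / (1 + R)) ^ 2 = 1 / (1 + R) ^ 2 := one_div_pow _ _
              rw [← hinv]
              linarith

lemma continuousOn_forcingL1 (α : ℝ) (Ω : ℝ → ℝ → ℝ) : ContinuousOn (forcingL1 α Ω) (Ioi 0) := by
  have hR : ∀ R ∈ Ioi (0 : ℝ), 1 + R ≠ 0 := fun R hR => by linarith [mem_Ioi.1 hR]
  unfold forcingL1
  fun_prop (disch := simpa)

lemma continuousOn_forcingL2 (α : ℝ) (hint : Integrable (angularMoment Ω)) :
    ContinuousOn (forcingL2 α Ω) (Ioi 0) := by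
  have hR : ∀ R ∈ Ioi (0 : ℝ), 1 + R ≠ 0 := fun R hR => by linarith [mem_Ioi.1 hR]
  have := continuous_tL12 hint
  unfold forcingL2
  fun_prop (disch := simpa)

section RadialMajorant

variable {a m : ℝ → ℝ}

lemma integrableOn_mul_DbetaΓ_sq (hα : 0 < α) (hα20 : α ≤ 20) (ha : ContinuousOn a (Ioi 0))
    (hm : IntegrableOn m (Ioi 0))
    (ham : ∀ R ∈ Ioi (0 : ℝ), a R * (a R * ((1 + R) ^ 4 / R ^ 4)) ≤ m R) :
    IntegrableOn (fun p : ℝ × ℝ => a p.1 * DbetaΓ α p.2 *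
      (a p.1 * DbetaΓ α p.2 * phi2 α p.1 p.2)) Qdom := by
  have hweight : ContinuousOn (fun R : ℝ => (1 + R) ^ 4 / R ^ 4) (Ioi 0) :=
    ContinuousOn.div (by fun_prop) (by fun_prop) fun R hR => pow_ne_zero 4 (mem_Ioi.1 hR).ne'
  have hradial : IntegrableOn (fun R => a R * (a R * ((1 + R) ^ 4 / R ^ 4))) (Ioi 0) := by
    refine hm.mono' ((ha.mul (ha.mul hweight)).aestronglyMeasurable measurableSet_Ioi)
      ((ae_restrict_iff' measurableSet_Ioi).2 (.of_forall fun R hR => ?_))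
    rw [norm_of_nonneg (mul_mul_self_nonneg (by positivity))]
    exact ham R hR
  have hprod := hradial.mul_prod (integrableOn_DbetaΓ_sq hα hα20)
  rw [Measure.prod_restrict, ← Measure.volume_eq_prod] at hprod
  refine hprod.congr (.of_forall fun p => ?_)
  simp only [phi2]
  ring

lemma norm2_mul_DbetaΓ_sq_le (hα : 0 < α) (hα20 : α ≤ 20) (hm : IntegrableOn m (Ioi 0))
    (ham : ∀ R ∈ Ioi (0 : ℝ), a R * (a R * ((1 + R) ^ 4 / R ^ 4)) ≤ m R) :
    norm2 (fun R β => a R * DbetaΓ α β * √(phi2 α R β)) ^ 2 ≤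
      (∫ R in Ioi 0, m R) * (40 / 19 * α) := by
  have hnonneg : ∀ R ∈ Ioi (0 : ℝ), 0 ≤ a R * (a R * ((1 + R) ^ 4 / R ^ 4)) :=
    fun R _ => mul_mul_self_nonneg (by positivity)
  have hm_nonneg : 0 ≤ ∫ R in Ioi 0, m R :=
    setIntegral_nonneg measurableSet_Ioi fun R hR => (hnonneg R hR).trans (ham R hR)
  have hangular : 0 ≤ ∫ β in Ioo 0 (π / 2),
      DbetaΓ α β * (DbetaΓ α β * sin (2 * β) ^ (-(1 + α / 10))) :=
    setIntegral_nonneg measurableSet_Ioo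
      fun β hβ => mul_mul_self_nonneg (rpow_nonneg (sin_two_mul_pos hβ).le _)
  calc norm2 (fun R β => a R * DbetaΓ α β * √(phi2 α R β)) ^ 2
      = inner2 (fun R β => a R * DbetaΓ α β) (fun R β => a R * ((1 + R) ^ 4 / R ^ 4) *
          (DbetaΓ α β * sin (2 * β) ^ (-(1 + α / 10)))) := by
        rw [norm2_mul_sqrt_sq fun p hp => phi2_nonneg α hp]
        refine inner2_congr fun p _ => ?_
        simp only [phi2]
        ring
    _ = (∫ R in Ioi 0, a R * (a R * ((1 + R) ^ 4 / R ^ 4))) * ∫ β in Ioo 0 (π / 2),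
          DbetaΓ α β * (DbetaΓ α β * sin (2 * β) ^ (-(1 + α / 10))) := inner2_mul_mul _ _ _ _
    _ ≤ (∫ R in Ioi 0, m R) * (40 / 19 * α) :=
        mul_le_mul (integral_mono_of_nonneg
          ((ae_restrict_iff' measurableSet_Ioi).2 (.of_forall hnonneg)) hm
          ((ae_restrict_iff' measurableSet_Ioi).2 (.of_forall ham)))
          (integral_DbetaΓ_sq_le hα hα20) hangular hm_nonneg

end RadialMajorant

lemma integrableOn_forcingL1_sq (hα : 0 < α) (hα20 : α ≤ 20) (Ω : ℝ → ℝ → ℝ) :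
    IntegrableOn (fun p : ℝ × ℝ => forcingL1 α Ω p.1 * DbetaΓ α p.2 *
      (forcingL1 α Ω p.1 * DbetaΓ α p.2 * phi2 α p.1 p.2)) Qdom :=
  integrableOn_mul_DbetaΓ_sq hα hα20 (continuousOn_forcingL1 α Ω)
    (integrableOn_one_div_one_add_sq.const_mul _) fun _ hR => (forcingL1_sq_mul_weight α Ω hR).le

lemma norm2_forcingL1_sq_le (hα : 0 < α) (hα20 : α ≤ 20) (Ω : ℝ → ℝ → ℝ) :
    norm2 (fun R β => forcingL1 α Ω R * DbetaΓ α β * √(phi2 α R β)) ^ 2 ≤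
      9 * (α + 2) ^ 2 * L12 Ω 0 ^ 2 * (40 / 19 * α) := by
  have hbound := norm2_mul_DbetaΓ_sq_le hα hα20
    (integrableOn_one_div_one_add_sq.const_mul (9 * (α + 2) ^ 2 * L12 Ω 0 ^ 2))
    fun _ hR => (forcingL1_sq_mul_weight α Ω hR).le
  rwa [integral_const_mul, integral_Ioi_one_div_one_add_sq, mul_one] at hbound

lemma integrableOn_forcingL2_majorant (hΩ : Continuous (Function.uncurry Ω)) (hsupp : suppIn Ω) :
    IntegrableOn (fun R => (α + 2) ^ 2 *
      (18 * (tL12 Ω R / R) ^ 2 + 162 * L12 Ω 0 ^ 2 * (1 / (1 + R) ^ 2))) (Ioi 0) :=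
  (((integrableOn_sq_tL12_div hΩ hsupp).const_mul 18).add
    (integrableOn_one_div_one_add_sq.const_mul _)).const_mul _

lemma integrableOn_forcingL2_sq (hα : 0 < α) (hα20 : α ≤ 20)
    (hΩ : Continuous (Function.uncurry Ω)) (hsupp : suppIn Ω) :
    IntegrableOn (fun p : ℝ × ℝ => forcingL2 α Ω p.1 * DbetaΓ α p.2 *
      (forcingL2 α Ω p.1 * DbetaΓ α p.2 * phi2 α p.1 p.2)) Qdom :=
  integrableOn_mul_DbetaΓ_sq hα hα20 (continuousOn_forcingL2 α (integrable_angularMoment hΩ hsupp))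
    (integrableOn_forcingL2_majorant hΩ hsupp) fun _ hR => forcingL2_sq_mul_weight_le α Ω hR

lemma norm2_forcingL2_sq_le (hα : 0 < α) (hα20 : α ≤ 20) (hΩ : Continuous (Function.uncurry Ω))
    (hsupp : suppIn Ω) :
    norm2 (fun R β => forcingL2 α Ω R * DbetaΓ α β * √(phi2 α R β)) ^ 2 ≤
      (α + 2) ^ 2 * (18 * normR (fun R => tL12 Ω R / R) ^ 2 + 162 * L12 Ω 0 ^ 2) *
        (40 / 19 * α) := by
  have hbound := norm2_mul_DbetaΓ_sq_le hα hα20 (integrableOn_forcingL2_majorant hΩ hsupp)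
    fun _ hR => forcingL2_sq_mul_weight_le α Ω hR
  rwa [integral_const_mul, integral_add ((integrableOn_sq_tL12_div hΩ hsupp).const_mul 18)
    (integrableOn_one_div_one_add_sq.const_mul _), integral_const_mul, integral_const_mul,
    integral_Ioi_one_div_one_add_sq, mul_one, ← normR_sq] at hbound

lemma continuousOn_mul_DbetaΓ {a : ℝ → ℝ} (hα : 0 ≤ α) (ha : ContinuousOn a (Ioi 0)) :
    ContinuousOn (Function.uncurry fun R β => a R * DbetaΓ α β) Qdom :=
  (ha.comp continuousOn_fst fun _ hp => hp.1).mul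
    ((continuous_DbetaΓ hα).comp continuous_snd).continuousOn

end Forcing

theorem angular_derivative_estimate_general {α : ℝ} (hα : 0 < α) (hα20 : α ≤ 20)
    {Ω η : ℝ → ℝ → ℝ} (hΩ : ContDiff ℝ 2 (Function.uncurry Ω))
    (hη : ContDiff ℝ 2 (Function.uncurry η)) (hΩsupp : suppIn Ω) (hηsupp : suppIn η) :
    inner2 (Dbeta (opL1 α Ω η)) (fun R β => Dbeta Ω R β * phi2 α R β)
        + inner2 (Dbeta (opL2 α Ω η)) (fun R β => Dbeta η R β * phi2 α R β)
      ≤ -(1 / 5 - α) * (norm2 (fun R β => Dbeta Ω R β * √(phi2 α R β)) ^ 2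
            + norm2 (fun R β => Dbeta η R β * √(phi2 α R β)) ^ 2)
        + 1800 * (α + 2) ^ 2 * α * (L12 Ω 0 ^ 2 + normR (fun R => tL12 Ω R / R) ^ 2) := by
  have hforcing1 := norm2_forcingL1_sq_le hα hα20 Ω
  have hforcing2 := norm2_forcingL2_sq_le hα hα20 hΩ.continuous hΩsupp
  have henergy := weighted_energy_estimate hα.le (contDiff_Dbeta (n := 1) hΩ)
    (contDiff_Dbeta (n := 1) hη) hΩsupp.Dbeta hηsupp.Dbeta
    (continuousOn_mul_DbetaΓ hα.le (continuousOn_forcingL1 α Ω))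
    (continuousOn_mul_DbetaΓ hα.le
      (continuousOn_forcingL2 α (integrable_angularMoment hΩ.continuous hΩsupp)))
    (integrableOn_forcingL1_sq hα hα20 Ω)
    (integrableOn_forcingL2_sq hα hα20 hΩ.continuous hΩsupp)
  have htail : 0 ≤ (α + 2) ^ 2 * α * normR (fun R => tL12 Ω R / R) ^ 2 := by positivity
  refine le_of_eq_of_le (congrArg₂ (· + ·) (inner2_congr fun p hp => ?_)
    (inner2_congr fun p hp => ?_)) (henergy.trans ?_)
  · rw [Dbeta_opL1 hα hΩ (hη.of_le one_le_two) hp]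
  · rw [Dbeta_opL2 hα hη hp]
  · linarith

/-- weighted `L²` estimate for the angular derivatives `D_β Ω, D_β η`. -/
theorem angular_derivative_estimate :
    ∃ C : ℝ, ∀ α : ℝ, 0 < α → α ≤ 1/1000 →
      ∀ Ω η : ℝ → ℝ → ℝ,
        ContDiff ℝ 2 (Function.uncurry Ω) → ContDiff ℝ 2 (Function.uncurry η) →
        suppIn Ω → suppIn η →
        inner2 (Dbeta (opL1 α Ω η)) (fun R β => Dbeta Ω R β * phi2 α R β)
            + inner2 (Dbeta (opL2 α Ω η)) (fun R β => Dbeta η R β * phi2 α R β)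
          ≤ -(1/5 - α) *
              ((norm2 (fun R β => Dbeta Ω R β * Real.sqrt (phi2 α R β)))^2
                + (norm2 (fun R β => Dbeta η R β * Real.sqrt (phi2 α R β)))^2)
            + C * α * ((L12 Ω 0)^2 + (normR (fun R => tL12 Ω R / R))^2) := by
  refine ⟨1800 * 3 ^ 2, fun α hα hα1000 Ω η hΩ hη hΩsupp hηsupp =>
    (angular_derivative_estimate_general hα (by linarith) hΩ hη hΩsupp hηsupp).trans ?_⟩
  gcongr
  linarith

end Paper
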